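/- For every i ∈ {1,…,n}, the variance of the degree of node V_i under the Pólya joint law is Var(deg_i) = (1 + 2i/(1/δ + n − i)) · [(n−i)·ρ·((n−i)(δ+ρ) + 1 − ρ)/(1+δ)] + i²·ρ + 2i·ρ²·(n−i)/(1 + nδ − iδ) − (nρ)². -/

import Mathlib

open Finset

/-- The Pólya joint law on binary `n`-tuples. -/
noncomputable def polyaP (n : ℕ) (R B Δ : ℝ) (z : Fin n → Fin 2) : ℝ :=
  (∏ i ∈ Finset.range (∑ t, (z t : ℕ)), (R + i * Δ)) *
    (∏ j ∈ Finset.range (n - ∑ t, (z t : ℕ)), (B + j * Δ)) /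
    ∏ m ∈ Finset.range n, (R + B + m * Δ)

/-- The degree of node `V_i` (here `i : Fin n` represents the paper's node `i+1`). -/
def degNode (n : ℕ) (i : Fin n) (z : Fin n → Fin 2) : ℕ :=
  ((i : ℕ) + 1) * (z i : ℕ) + ∑ j ∈ Finset.univ.filter (fun j => i < j), (z j : ℕ)

lemma polya_sum_split (n : ℕ) (j : Fin (n+1)) (F : (Fin (n+1) → Fin 2) → ℝ) :
    ∑ z, F z = ∑ z : Fin n → Fin 2, (F (j.insertNth 0 z) + F (j.insertNth 1 z)) := by
  rw [← (Fin.insertNthEquiv (fun _ => Fin 2) j).sum_comp, Fintype.sum_prod_type,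
    Fin.sum_univ_two, ← Finset.sum_add_distrib]
  rfl

lemma polya_count_le (n : ℕ) (z : Fin n → Fin 2) : ∑ t, (z t : ℕ) ≤ n := by
  calc ∑ t, (z t : ℕ) ≤ ∑ _t : Fin n, 1 := Finset.sum_le_sum (fun t _ => by omega)
    _ = n := by simp

lemma polya_prod_shift (n : ℕ) (A Δ : ℝ) :
    ∏ i ∈ Finset.range (n+1), (A + i * Δ) = A * ∏ i ∈ Finset.range n, (A + Δ + i * Δ) := by
  rw [Finset.prod_range_succ', mul_comm]
  congr 1
  · simp
  · apply Finset.prod_congr rfl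
    intro i _
    push_cast
    ring

lemma polyaP_ins_one (n : ℕ) (R B Δ : ℝ) (j : Fin (n+1)) (z : Fin n → Fin 2) :
    polyaP (n+1) R B Δ (j.insertNth 1 z) = R / (R + B) * polyaP n (R + Δ) B Δ z := by
  have h : ∑ t, ((j.insertNth (α := fun _ => Fin 2) 1 z t : Fin 2) : ℕ)
      = (∑ t, (z t : ℕ)) + 1 := by
    rw [Fin.sum_univ_succAbove _ j]; simp [add_comm]
  unfold polyaP
  rw [h, polya_prod_shift, polya_prod_shift, Nat.add_sub_add_right,
    show R + Δ + B = R + B + Δ by ring]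
  rw [div_mul_div_comm, mul_assoc]

lemma polyaP_ins_zero (n : ℕ) (R B Δ : ℝ) (j : Fin (n+1)) (z : Fin n → Fin 2) :
    polyaP (n+1) R B Δ (j.insertNth 0 z) = B / (R + B) * polyaP n R (B + Δ) Δ z := by
  have h : ∑ t, ((j.insertNth (α := fun _ => Fin 2) 0 z t : Fin 2) : ℕ)
      = (∑ t, (z t : ℕ)) := by
    rw [Fin.sum_univ_succAbove _ j]; simp
  have hle := polya_count_le n z
  unfold polyaP
  rw [h, show n + 1 - ∑ t, (z t : ℕ) = (n - ∑ t, (z t : ℕ)) + 1 by omega,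
    polya_prod_shift, polya_prod_shift, show R + (B + Δ) = R + B + Δ by ring]
  rw [div_mul_div_comm, mul_left_comm]

lemma polyaP_total (n : ℕ) (Δ : ℝ) (hΔ : 0 < Δ) : ∀ R B : ℝ, 0 < R → 0 < B →
    ∑ z, polyaP n R B Δ z = 1 := by
  induction n with
  | zero => intro R B _ _; simp [polyaP]
  | succ n ih =>
    intro R B hR hB
    rw [polya_sum_split n 0]
    simp only [polyaP_ins_one, polyaP_ins_zero]
    rw [Finset.sum_add_distrib, ← Finset.mul_sum, ← Finset.mul_sum, ih _ _ hR (by positivity),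
      ih _ _ (by positivity) hB]
    field_simp
    ring

lemma polyaP_first (n : ℕ) (R B Δ : ℝ) (hR : 0 < R) (hB : 0 < B) (hΔ : 0 < Δ) (j : Fin n) :
    ∑ z, polyaP n R B Δ z * ((z j : ℕ) : ℝ) = R / (R + B) := by
  obtain _ | n := n
  · exact j.elim0
  rw [polya_sum_split n j]
  simp only [polyaP_ins_one, polyaP_ins_zero, Fin.insertNth_apply_same]
  simp [← Finset.mul_sum, polyaP_total n Δ hΔ (R + Δ) B (by positivity) hB]

lemma polyaP_second (n : ℕ) (R B Δ : ℝ) (hR : 0 < R) (hB : 0 < B) (hΔ : 0 < Δ)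
    (j k : Fin n) (hjk : k ≠ j) :
    ∑ z, polyaP n R B Δ z * (((z j : ℕ) : ℝ) * ((z k : ℕ) : ℝ)) =
      R / (R + B) * ((R + Δ) / (R + Δ + B)) := by
  obtain _ | n := n
  · exact j.elim0
  obtain ⟨k, rfl⟩ := Fin.exists_succAbove_eq hjk
  rw [polya_sum_split n j]
  simp only [polyaP_ins_one, polyaP_ins_zero, Fin.insertNth_apply_same,
    Fin.insertNth_apply_succAbove]
  simp [mul_assoc, ← Finset.mul_sum, polyaP_first n (R + Δ) B Δ (by positivity) hB hΔ k]

lemma polyaP_second' (n : ℕ) (R B Δ : ℝ) (hR : 0 < R) (hB : 0 < B) (hΔ : 0 < Δ)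
    (j k : Fin n) :
    ∑ z, polyaP n R B Δ z * (((z j : ℕ) : ℝ) * ((z k : ℕ) : ℝ)) =
      R / (R + B) * ((R + Δ) / (R + Δ + B)) +
        if k = j then R / (R + B) - R / (R + B) * ((R + Δ) / (R + Δ + B)) else 0 := by
  split_ifs with h
  · subst h
    rw [add_sub_cancel, ← polyaP_first n R B Δ hR hB hΔ k]
    refine Finset.sum_congr rfl fun z _ => ?_
    congr 1
    generalize z k = x
    fin_cases x <;> simp
  · rw [polyaP_second n R B Δ hR hB hΔ j k h, add_zero]

/-- Coefficients of the degree as a linear form in the draws. -/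
noncomputable def degCoef (n : ℕ) (i j : Fin n) : ℝ :=
  (if j = i then ((i : ℕ) : ℝ) + 1 else 0) + if i < j then 1 else 0

lemma degNode_eq (n : ℕ) (i : Fin n) (z : Fin n → Fin 2) :
    (degNode n i z : ℝ) = ∑ j, degCoef n i j * ((z j : ℕ) : ℝ) := by
  simp [degNode, degCoef, add_mul, Finset.sum_add_distrib, Finset.sum_filter]

lemma degCoef_card (n : ℕ) (i : Fin n) :
    (∑ j : Fin n, if i < j then (1:ℝ) else 0) = n - (((i : ℕ) : ℝ) + 1) := by
  rw [← Finset.sum_filter, Finset.sum_const, nsmul_eq_mul, mul_one]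
  have : (Finset.univ.filter (fun j => i < j)) = Finset.Ioi i := by ext; simp
  rw [this, Fin.card_Ioi, Nat.sub_sub, Nat.cast_sub (by omega)]
  push_cast
  ring

lemma degCoef_sum (n : ℕ) (i : Fin n) : ∑ j, degCoef n i j = n := by
  simp only [degCoef, Finset.sum_add_distrib, degCoef_card]
  simp

lemma degCoef_sum_sq (n : ℕ) (i : Fin n) :
    ∑ j, degCoef n i j ^ 2 = (((i : ℕ) : ℝ) + 1) ^ 2 + (n - (((i : ℕ) : ℝ) + 1)) := by
  have h : ∀ j, degCoef n i j ^ 2 =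
      (if j = i then (((i : ℕ) : ℝ) + 1) ^ 2 else 0) + if i < j then 1 else 0 := by
    intro j
    unfold degCoef
    by_cases h : j = i
    · subst h; simp
    · by_cases h' : i < j <;> simp [h, h']
  simp only [h, Finset.sum_add_distrib, degCoef_card]
  simp

lemma polya_mean (n : ℕ) (R B Δ : ℝ) (hR : 0 < R) (hB : 0 < B) (hΔ : 0 < Δ) (i : Fin n) :
    ∑ z, polyaP n R B Δ z * (degNode n i z : ℝ) = n * (R / (R + B)) := by
  simp only [degNode_eq, Finset.mul_sum]
  rw [Finset.sum_comm]
  simp only [mul_left_comm _ (degCoef n i _), ← Finset.mul_sum, polyaP_first n R B Δ hR hB hΔ]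
  rw [← Finset.sum_mul, degCoef_sum]

lemma polya_sq (n : ℕ) (R B Δ : ℝ) (hR : 0 < R) (hB : 0 < B) (hΔ : 0 < Δ) (i : Fin n) :
    ∑ z, polyaP n R B Δ z * (degNode n i z : ℝ) ^ 2 =
      (n : ℝ) ^ 2 * (R / (R + B) * ((R + Δ) / (R + Δ + B))) +
      ((((i : ℕ) : ℝ) + 1) ^ 2 + (n - (((i : ℕ) : ℝ) + 1))) *
        (R / (R + B) - R / (R + B) * ((R + Δ) / (R + Δ + B))) := by
  have h1 : ∀ z, polyaP n R B Δ z * (degNode n i z : ℝ) ^ 2 =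
      ∑ j, ∑ k, degCoef n i j * degCoef n i k *
        (polyaP n R B Δ z * (((z j : ℕ) : ℝ) * ((z k : ℕ) : ℝ))) := by
    intro z
    rw [degNode_eq, sq, Finset.sum_mul_sum, Finset.mul_sum]
    refine Finset.sum_congr rfl fun j _ => ?_
    rw [Finset.mul_sum]
    refine Finset.sum_congr rfl fun k _ => ?_
    ring
  simp only [h1]
  rw [Finset.sum_comm]
  have h2 : ∀ j : Fin n, ∑ z, ∑ k, degCoef n i j * degCoef n i k *
        (polyaP n R B Δ z * (((z j : ℕ) : ℝ) * ((z k : ℕ) : ℝ))) =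
      degCoef n i j * (n * (R / (R + B) * ((R + Δ) / (R + Δ + B)))) +
      degCoef n i j ^ 2 * (R / (R + B) - R / (R + B) * ((R + Δ) / (R + Δ + B))) := by
    intro j
    rw [Finset.sum_comm]
    simp only [← Finset.mul_sum, polyaP_second' n R B Δ hR hB hΔ, mul_add,
      Finset.sum_add_distrib]
    rw [← Finset.sum_mul, ← Finset.mul_sum, degCoef_sum]
    simp only [mul_ite, mul_zero, Finset.sum_ite_eq', Finset.mem_univ, if_true]
    ring
  simp only [h2, Finset.sum_add_distrib]
  rw [← Finset.sum_mul, ← Finset.sum_mul, degCoef_sum, degCoef_sum_sq]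
  ring

/-- The variance of the degree of node `V_i` under the Pólya joint law. -/
theorem polyaP_degree_variance (n : ℕ) (hn : 1 ≤ n) (R B Δ : ℝ)
    (hR : 0 < R) (hB : 0 < B) (hΔ : 0 < Δ) (ρ δ : ℝ)
    (hρ : ρ = R / (R + B)) (hδ : δ = Δ / (R + B)) (i : Fin n) :
    (∑ z : Fin n → Fin 2, polyaP n R B Δ z * (degNode n i z : ℝ) ^ 2) -
        (∑ z : Fin n → Fin 2, polyaP n R B Δ z * (degNode n i z : ℝ)) ^ 2 =
      (1 + 2 * ((i : ℕ) + 1 : ℝ) / (1 / δ + n - ((i : ℕ) + 1 : ℝ))) *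
          ((n - ((i : ℕ) + 1 : ℝ)) * ρ *
              ((n - ((i : ℕ) + 1 : ℝ)) * (δ + ρ) + 1 - ρ) / (1 + δ)) +
        ((i : ℕ) + 1 : ℝ) ^ 2 * ρ +
        2 * ((i : ℕ) + 1 : ℝ) * ρ ^ 2 * (n - ((i : ℕ) + 1 : ℝ)) /
          (1 + n * δ - ((i : ℕ) + 1 : ℝ) * δ) -
        (n * ρ) ^ 2 := by
  rw [polya_mean n R B Δ hR hB hΔ, polya_sq n R B Δ hR hB hΔ]
  have hi : ((i : ℕ) : ℝ) + 1 ≤ n := by exact_mod_cast i.2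
  have hi0 : (0 : ℝ) ≤ ((i : ℕ) : ℝ) := Nat.cast_nonneg _
  generalize ((i : ℕ) : ℝ) + 1 = a at *
  obtain ⟨m, hm⟩ : ∃ m : ℝ, m = n - a := ⟨_, rfl⟩
  have hm0 : 0 ≤ m := by linarith
  have hnm : (n : ℝ) = m + a := by linarith
  have hS : 0 < R + B := by positivity
  have hδ0 : 0 < δ := by rw [hδ]; positivity
  have hc : (R + Δ) / (R + Δ + B) = (ρ + δ) / (1 + δ) := by
    rw [hρ, hδ]
    field_simp
    ring
  rw [hc, ← hρ, hnm]
  have e1 : 1 / δ + (m + a) - a = (1 + m * δ) / δ := by field_simp; ring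
  have e2 : 1 + (m + a) * δ - a * δ = 1 + m * δ := by ring
  rw [e1, e2, show m + a - a = m by ring]
  have : 0 < 1 + m * δ := by positivity
  have : 0 < 1 + δ := by positivity
  clear hc hρ hδ
  field_simp
  ring
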